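/- Every continuous map f : S^d → ℝ^d (d ≥ 1) satisfying f(−x) = −f(x) for all x has a zero. (Borsuk–Ulam for the case n = 1 of the Stiefel manifold W_1(ℝ^{d+1}) = S^d.) -/

import Mathlib

/-- A finite-dimensional commutative `ℝ`-algebra of odd dimension has a real point. -/
theorem exists_algHom_real_of_odd_finrank (n : ℕ) : ∀ (A : Type*) [CommRing A] [Algebra ℝ A]
    [FiniteDimensional ℝ A], Module.finrank ℝ A = n → Odd n → Nonempty (A →ₐ[ℝ] ℝ) := by
  induction n using Nat.strong_induction_on with
  | _ n ih =>
    intro A _ _ _ hn hodd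
    have : Nontrivial A := Module.nontrivial_of_finrank_pos (R := ℝ) (hn ▸ hodd.pos)
    by_cases hA : IsField A
    · let := hA.toField
      rcases Real.nonempty_algEquiv_or A with ⟨⟨e⟩⟩ | ⟨⟨e⟩⟩
      · exact ⟨e.toAlgHom⟩
      · rw [← hn, e.toLinearEquiv.finrank_eq, Complex.finrank_real_complex] at hodd
        exact absurd hodd (by decide)
    · obtain ⟨x, hx0, hx⟩ := Ring.exists_not_isUnit_of_not_isField hA
      have key (I : Ideal A) (hI : I ≠ ⊥) (h : Odd (Module.finrank ℝ (A ⧸ I))) :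
          Nonempty (A →ₐ[ℝ] ℝ) := by
        have hlt : Module.finrank ℝ (A ⧸ I) < n := by
          have := Submodule.finrank_quotient_add_finrank (I.restrictScalars ℝ)
          have hpos : 0 < Module.finrank ℝ (I.restrictScalars ℝ) := by
            rw [Module.finrank_pos_iff, Submodule.nontrivial_iff_ne_bot]
            simpa using hI
          have h2 : Module.finrank ℝ (A ⧸ I) = Module.finrank ℝ (A ⧸ I.restrictScalars ℝ) := rfl
          omega
        obtain ⟨φ⟩ := ih _ hlt (A ⧸ I) rfl h
        exact ⟨φ.comp (Ideal.Quotient.mkₐ ℝ I)⟩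
      let L : A →ₗ[ℝ] A := LinearMap.mulLeft ℝ x
      let J : Ideal A := LinearMap.ker (LinearMap.mulLeft A x)
      let I : Ideal A := LinearMap.range (LinearMap.mulLeft A x)
      have hI : I ≠ ⊥ := fun h ↦ hx0 <| by
        have : x ∈ I := ⟨1, by simp⟩
        simpa [h] using this
      have h1 : Module.finrank ℝ (A ⧸ I) + Module.finrank ℝ (LinearMap.range L) = n :=
        hn ▸ Submodule.finrank_quotient_add_finrank (LinearMap.range L)
      have h2 : Module.finrank ℝ (A ⧸ J) = Module.finrank ℝ (LinearMap.range L) :=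
        L.quotKerEquivRange.finrank_eq
      have hJ : J ≠ ⊥ := by
        intro h
        have hinj : Function.Injective L :=
          (LinearMap.ker_eq_bot (f := LinearMap.mulLeft A x)).mp h
        obtain ⟨y, hy⟩ := LinearMap.surjective_of_injective hinj 1
        exact hx (IsUnit.of_mul_eq_one y hy)
      rcases Nat.even_or_odd (Module.finrank ℝ (A ⧸ I)) with he | ho
      · refine key J hJ ?_
        rw [h2]
        rw [← h1] at hodd
        exact (Nat.odd_add'.1 hodd).2 he
      · exact key I hI ho

namespace MvPolynomial

variable {σ : Type*}

theorem IsHomogeneous.eval_mul_left {R : Type*} [CommSemiring R] {F : MvPolynomial σ R} {n : ℕ}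
    (hF : F.IsHomogeneous n) (t : R) (y : σ → R) :
    eval (fun i ↦ t * y i) F = t ^ n * eval y F := by
  rw [eval_eq, eval_eq, Finset.mul_sum]
  refine Finset.sum_congr rfl fun m hm ↦ ?_
  simp only [mul_pow, Finset.prod_mul_distrib, Finset.prod_pow_eq_pow_sum]
  rw [← hF.degree_eq_sum_deg_support hm]
  ring

theorem totalDegree_aeval_le {τ R : Type*} [CommSemiring R] {g : σ → MvPolynomial τ R}
    (hg : ∀ i, (g i).totalDegree ≤ 1) (F : MvPolynomial σ R) :
    (aeval g F).totalDegree ≤ F.totalDegree := by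
  rw [aeval_def, eval₂_eq]
  refine totalDegree_finsetSum_le fun m hm ↦ (totalDegree_mul _ _).trans ?_
  rw [algebraMap_eq, totalDegree_C, zero_add]
  refine (totalDegree_finsetProd _ _).trans (le_trans ?_ (le_totalDegree hm))
  refine Finset.sum_le_sum fun i _ ↦ (totalDegree_pow _ _).trans ?_
  simpa using Nat.mul_le_mul_left (m i) (hg i)

theorem eval_sub_eval_neg {R : Type*} [CommRing R] (q : MvPolynomial σ R) {n : ℕ}
    (hn : q.totalDegree ≤ n) (y : σ → R) :
    eval y q - eval (fun i ↦ -y i) q =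
      2 * ∑ k ∈ Finset.range (n + 1), eval y (homogeneousComponent (2 * k + 1) q) := by
  have hq : q = ∑ k ∈ Finset.range (n + 1),
      (homogeneousComponent (2 * k) q + homogeneousComponent (2 * k + 1) q) := by
    have hpair (a : ℕ → MvPolynomial σ R) (N : ℕ) : ∑ k ∈ Finset.range (2 * N), a k =
        ∑ k ∈ Finset.range N, (a (2 * k) + a (2 * k + 1)) := by
      induction N with
      | zero => simp
      | succ N ih =>
        rw [Nat.mul_succ, Finset.sum_range_succ, Finset.sum_range_succ, ih, Finset.sum_range_succ,
          add_assoc]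
    rw [← hpair (fun k ↦ homogeneousComponent k q)]
    nth_rewrite 1 [← sum_homogeneousComponent q]
    refine Finset.sum_subset (Finset.range_mono (by omega)) fun k _ hk ↦ ?_
    exact homogeneousComponent_eq_zero _ _ (by simpa using hk)
  have hneg (k : ℕ) : eval (fun i ↦ -y i) (homogeneousComponent k q) =
      (-1) ^ k * eval y (homogeneousComponent k q) := by
    rw [← (homogeneousComponent_isHomogeneous k q).eval_mul_left]
    simp
  conv_lhs => rw [hq]
  simp only [map_sum, map_add, hneg, Finset.mul_sum, ← Finset.sum_sub_distrib]
  refine Finset.sum_congr rfl fun k _ ↦ ?_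
  rw [pow_succ, pow_mul]
  simp only [neg_one_sq, one_pow]
  ring

/-- If `φ m` has degree at most that of `m` and, for each `n`, the matrix of coefficients of the
`φ m` with `m` of degree at most `n` is invertible, then the `φ m` form a basis. -/
theorem bijective_linearCombination_of_det_ne_zero [DecidableEq σ] {K : Type*} [Field K]
    (φ : (σ →₀ ℕ) → MvPolynomial σ K) (S : ℕ → Finset (σ →₀ ℕ))
    (hS : ∀ n m, m ∈ S n ↔ m.degree ≤ n)
    (hφ : ∀ m, (φ m).totalDegree ≤ m.degree)
    (hdet : ∀ n, (Matrix.of fun m m' : S n ↦ coeff (m : σ →₀ ℕ) (φ m')).det ≠ 0) :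
    Function.Bijective (Finsupp.linearCombination K φ) := by
  constructor
  · rw [injective_iff_map_eq_zero]
    intro c hc
    set n := c.support.sup Finsupp.degree
    have hsub : c.support ⊆ S n := fun m hm ↦ (hS n m).2 (Finset.le_sup (f := Finsupp.degree) hm)
    have hv : (fun m : S n ↦ c m) = 0 := by
      refine Matrix.eq_zero_of_mulVec_eq_zero (hdet n) ?_
      ext m
      have := congrArg (coeff (m : σ →₀ ℕ)) hc
      rw [Finsupp.linearCombination_apply, Finsupp.sum_of_support_subset _ hsub _ (by simp),
        coeff_sum, ← Finset.sum_coe_sort] at this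
      simpa [Matrix.mulVec, dotProduct, mul_comm] using this
    ext m
    by_cases hm : m ∈ S n
    · exact congrFun hv ⟨m, hm⟩
    · exact Finsupp.notMem_support_iff.1 fun h ↦ hm (hsub h)
  · intro p
    set n := p.totalDegree
    set A := Matrix.of fun m m' : S n ↦ coeff (m : σ →₀ ℕ) (φ m')
    set w := A⁻¹.mulVec fun m : S n ↦ coeff (m : σ →₀ ℕ) p
    have hw : A.mulVec w = fun m : S n ↦ coeff (m : σ →₀ ℕ) p := by
      rw [Matrix.mulVec_mulVec, Matrix.mul_nonsing_inv _ (hdet n).isUnit, Matrix.one_mulVec]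
    refine ⟨∑ m : S n, Finsupp.single (m : σ →₀ ℕ) (w m), ?_⟩
    ext m
    simp only [map_sum, Finsupp.linearCombination_single, coeff_sum, coeff_smul, smul_eq_mul]
    by_cases hm : m ∈ S n
    · rw [← congrFun hw ⟨m, hm⟩]
      simp [Matrix.mulVec, dotProduct, A, mul_comm]
    · have hm' : n < m.degree := not_le.1 fun h ↦ hm ((hS n m).2 h)
      rw [coeff_eq_zero_of_totalDegree_lt (f := p) hm']
      refine Finset.sum_eq_zero fun m' _ ↦ ?_
      rw [coeff_eq_zero_of_totalDegree_lt (f := φ m'), mul_zero]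
      exact ((hφ m').trans ((hS n _).1 m'.2)).trans_lt hm'

variable [Fintype σ]

/-- The product of the powers `X i ^ (m i % D)` and `g i ^ (m i / D)`. If each `g i` behaves like
`X i ^ D`, this is a deformation of the monomial with exponent `m`. -/
noncomputable def mixedMonomial {R : Type*} [CommSemiring R] (D : ℕ) (g : σ → MvPolynomial σ R)
    (m : σ →₀ ℕ) : MvPolynomial σ R :=
  ∏ i, X i ^ (m i % D) * g i ^ (m i / D)

theorem totalDegree_mixedMonomial_le {R : Type*} [CommSemiring R] [Nontrivial R] {D : ℕ}
    {g : σ → MvPolynomial σ R} (hg : ∀ i, (g i).totalDegree ≤ D) (m : σ →₀ ℕ) :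
    (mixedMonomial D g m).totalDegree ≤ m.degree := by
  rw [Finsupp.degree_eq_sum]
  refine (totalDegree_finsetProd _ _).trans (Finset.sum_le_sum fun i _ ↦ ?_)
  refine (totalDegree_mul _ _).trans ?_
  rw [totalDegree_X_pow]
  calc m i % D + (g i ^ (m i / D)).totalDegree ≤ m i % D + (m i / D) * D := by
        gcongr
        exact (totalDegree_pow _ _).trans (Nat.mul_le_mul_left _ (hg i))
    _ = m i := by rw [mul_comm]; exact Nat.mod_add_div _ _

theorem mixedMonomial_X_pow {R : Type*} [CommSemiring R] (D : ℕ) (m : σ →₀ ℕ) :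
    mixedMonomial D (fun i ↦ (X i ^ D : MvPolynomial σ R)) m = monomial m 1 := by
  rw [monomial_eq, C_1, one_mul, Finsupp.prod_fintype _ _ (by simp)]
  refine Finset.prod_congr rfl fun i _ ↦ ?_
  rw [← pow_mul, ← pow_add, Nat.mod_add_div]

theorem map_mixedMonomial {R S : Type*} [CommSemiring R] [CommSemiring S] (f : R →+* S) (D : ℕ)
    (g : σ → MvPolynomial σ R) (m : σ →₀ ℕ) :
    map f (mixedMonomial D g m) = mixedMonomial D (fun i ↦ map f (g i)) m := by
  simp [mixedMonomial]

/-- For all but countably many `s`, the mixed monomials of the system `X i ^ D + s * p i` form a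
basis of the polynomial ring: in each bounded degree the transition determinant from the monomials
is a polynomial in `s` with value `1` at `s = 0`. -/
theorem countable_not_bijective_mixedMonomial {D : ℕ} {p : σ → MvPolynomial σ ℝ}
    (hp : ∀ i, (p i).totalDegree ≤ D) :
    {s : ℝ | ¬ Function.Bijective (Finsupp.linearCombination ℝ
      (mixedMonomial D fun i ↦ X i ^ D + C s * p i))}.Countable := by
  classical
  let S (n : ℕ) : Finset (σ →₀ ℕ) := (Finsupp.finite_of_degree_le n).toFinset
  have hS (n : ℕ) (m : σ →₀ ℕ) : m ∈ S n ↔ m.degree ≤ n := by simp [S]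
  let G (i : σ) : MvPolynomial σ (Polynomial ℝ) :=
    X i ^ D + C Polynomial.X * map Polynomial.C (p i)
  let Δ (n : ℕ) : Polynomial ℝ :=
    (Matrix.of fun m m' : S n ↦ coeff (m : σ →₀ ℕ) (mixedMonomial D G m')).det
  have hG (s : ℝ) (i : σ) : map (Polynomial.evalRingHom s) (G i) = X i ^ D + C s * p i := by
    have : (Polynomial.evalRingHom s).comp Polynomial.C = RingHom.id ℝ := by ext; simp
    simp [G, map_map, this, map_id]
  have hΔ (s : ℝ) (n : ℕ) : (Δ n).eval s = (Matrix.of fun m m' : S n ↦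
      coeff (m : σ →₀ ℕ) (mixedMonomial D (fun i ↦ X i ^ D + C s * p i) m')).det := by
    rw [← Polynomial.coe_evalRingHom, RingHom.map_det]
    congr 1
    ext m m'
    simp only [RingHom.mapMatrix_apply, Matrix.map_apply, Matrix.of_apply]
    rw [← coeff_map, map_mixedMonomial]
    simp only [hG]
  have hΔ0 (n : ℕ) : Δ n ≠ 0 := by
    intro h
    have h1 := hΔ 0 n
    have h2 : (Matrix.of fun m m' : S n ↦ coeff (m : σ →₀ ℕ)
        (mixedMonomial D (fun i ↦ X i ^ D + C (0 : ℝ) * p i) m')) = 1 := by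
      ext m m'
      simp only [C_0, zero_mul, add_zero, mixedMonomial_X_pow, Matrix.of_apply, coeff_monomial,
        Matrix.one_apply, Subtype.ext_iff, eq_comm]
    rw [h, h2] at h1
    simp at h1
  refine (Set.countable_iUnion fun n ↦
    (Polynomial.finite_setOfPred_isRoot (hΔ0 n)).countable).mono fun s hs ↦ ?_
  by_contra hcon
  simp only [Set.mem_iUnion, Set.mem_ofPred_eq, Polynomial.IsRoot, not_exists] at hcon
  refine hs (bijective_linearCombination_of_det_ne_zero _ S hS
    (totalDegree_mixedMonomial_le fun i ↦ ?_) fun n ↦ hΔ s n ▸ hcon n)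
  refine (totalDegree_add _ _).trans (max_le (totalDegree_X_pow _ _).le ?_)
  refine (totalDegree_mul _ _).trans ?_
  simpa using hp i

theorem mixedMonomial_mul {R : Type*} [CommSemiring R] {D : ℕ} (hD : 0 < D)
    (g : σ → MvPolynomial σ R) (m : σ →₀ ℕ) (i : σ) :
    mixedMonomial D g m * g i = mixedMonomial D g (m + Finsupp.single i D) := by
  classical
  have (j : σ) : X j ^ ((m + Finsupp.single i D) j % D) * g j ^ ((m + Finsupp.single i D) j / D) =
      X j ^ (m j % D) * g j ^ (m j / D) * if i = j then g j else 1 := by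
    by_cases h : i = j
    · subst h
      simp [Nat.add_div_right _ hD, pow_succ, mul_assoc]
    · simp [h]
  simp only [mixedMonomial, this, Finset.prod_mul_distrib, Finset.prod_ite_eq, Finset.mem_univ,
    if_true]

/-- If the mixed monomials of `g` form a basis, the quotient by the `g i` has dimension
`D ^ card σ`, so for odd `D` the `g i` have a common real zero. -/
theorem exists_eval_eq_zero_of_bijective_mixedMonomial {D : ℕ} (hD : Odd D)
    {g : σ → MvPolynomial σ ℝ}
    (hg : Function.Bijective (Finsupp.linearCombination ℝ (mixedMonomial D g))) :
    ∃ x : σ → ℝ, ∀ i, eval x (g i) = 0 := by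
  classical
  let e := LinearEquiv.ofBijective _ hg
  have he (m : σ →₀ ℕ) : e.symm (mixedMonomial D g m) = Finsupp.single m 1 := by
    rw [LinearEquiv.symm_apply_eq]
    simp [e]
  let ι (a : σ → Fin D) : σ →₀ ℕ := Finsupp.equivFunOnFinite.symm fun i ↦ (a i : ℕ)
  have hι : Function.Injective ι := fun a b h ↦ by
    funext i
    exact Fin.ext (by simpa [ι] using DFunLike.congr_fun h i)
  let L : MvPolynomial σ ℝ →ₗ[ℝ] ((σ → Fin D) → ℝ) :=
    (LinearMap.funLeft ℝ ℝ ι) ∘ₗ Finsupp.lcoeFun ∘ₗ e.symm.toLinearMap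
  have hL (q : MvPolynomial σ ℝ) (a : σ → Fin D) : L q a = e.symm q (ι a) := rfl
  have hLsurj : Function.Surjective L := by
    intro v
    refine ⟨e (∑ a, Finsupp.single (ι a) (v a)), ?_⟩
    ext a
    simp [hL, Finsupp.single_apply, hι.eq_iff]
  let I : Ideal (MvPolynomial σ ℝ) := Ideal.span (Set.range g)
  have hmem (m : σ →₀ ℕ) (hm : m ∉ Set.range ι) : mixedMonomial D g m ∈ I := by
    obtain ⟨i, hi⟩ : ∃ i, D ≤ m i := by
      by_contra! h
      exact hm ⟨fun i ↦ ⟨m i, h i⟩, by ext; simp [ι]⟩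
    refine Ideal.mem_of_dvd _ ?_ (Ideal.subset_span ⟨i, rfl⟩)
    refine dvd_trans (dvd_mul_of_dvd_right (dvd_pow_self _ ?_) _)
      (Finset.dvd_prod_of_mem _ (Finset.mem_univ i))
    exact (Nat.div_pos hi hD.pos).ne'
  have hker : LinearMap.ker L = I.restrictScalars ℝ := by
    apply le_antisymm
    · intro q hq
      obtain ⟨c, rfl⟩ := e.surjective q
      have hc (a) : c (ι a) = 0 := by simpa [hL] using congrFun (LinearMap.mem_ker.1 hq) a
      refine Submodule.sum_mem _ fun m hm ↦ Submodule.smul_mem _ _ (hmem m ?_)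
      rintro ⟨a, rfl⟩
      exact Finsupp.mem_support_iff.1 hm (hc a)
    · intro q hq
      obtain ⟨h, rfl⟩ := (Ideal.mem_span_range_iff_exists_fun).1 hq
      refine Submodule.sum_mem _ fun i _ ↦ ?_
      obtain ⟨c, hc⟩ := e.surjective (h i)
      rw [← hc]
      change Finsupp.linearCombination ℝ (mixedMonomial D g) c * g i ∈ _
      rw [Finsupp.linearCombination_apply, Finsupp.sum, Finset.sum_mul]
      refine Submodule.sum_mem _ fun m _ ↦ ?_
      rw [smul_mul_assoc, mixedMonomial_mul hD.pos]
      refine Submodule.smul_mem _ _ (LinearMap.mem_ker.2 ?_)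
      ext a
      rw [hL, he, Pi.zero_apply, Finsupp.single_apply, if_neg]
      intro h
      have := DFunLike.congr_fun h i
      simp only [Finsupp.add_apply, Finsupp.single_eq_same, ι,
        Finsupp.equivFunOnFinite_symm_apply_apply] at this
      have := (a i).2
      omega
  let E : (MvPolynomial σ ℝ ⧸ I) ≃ₗ[ℝ] ((σ → Fin D) → ℝ) :=
    (Submodule.quotEquivOfEq (I.restrictScalars ℝ) (LinearMap.ker L) hker.symm).trans
      (L.quotKerEquivOfSurjective hLsurj)
  have : FiniteDimensional ℝ (MvPolynomial σ ℝ ⧸ I) := E.symm.finiteDimensional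
  obtain ⟨ψ⟩ := exists_algHom_real_of_odd_finrank _ (MvPolynomial σ ℝ ⧸ I) rfl
    (by rw [E.finrank_eq, Module.finrank_fintype_fun_eq_card]; simpa using hD.pow)
  refine ⟨fun i ↦ ψ (Ideal.Quotient.mkₐ ℝ I (X i)), fun i ↦ ?_⟩
  have h1 : aeval (fun i ↦ ψ (Ideal.Quotient.mkₐ ℝ I (X i))) =
      ψ.comp (Ideal.Quotient.mkₐ ℝ I) := by
    ext; simp
  rw [← coe_aeval_eq_eval, RingHom.coe_coe, h1, AlgHom.comp_apply, Ideal.Quotient.mkₐ_eq_mk,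
    Ideal.Quotient.eq_zero_iff_mem.2 (Ideal.subset_span (Set.mem_range_self i)), map_zero]

theorem exists_eval_near_of_continuousOn {K : Set (EuclideanSpace ℝ σ)} (hK : IsCompact K)
    {h : EuclideanSpace ℝ σ → ℝ} (hh : ContinuousOn h K) {ε : ℝ} (hε : 0 < ε) :
    ∃ q : MvPolynomial σ ℝ, ∀ y ∈ K, |eval (fun i ↦ y i) q - h y| < ε := by
  have : CompactSpace K := isCompact_iff_compactSpace.1 hK
  let coord (i : σ) : C(K, ℝ) := ⟨fun y ↦ (y : EuclideanSpace ℝ σ) i, by fun_prop⟩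
  let A : Subalgebra ℝ C(K, ℝ) := (aeval coord).range
  have hA : A.SeparatesPoints := by
    intro x y hxy
    obtain ⟨i, hi⟩ : ∃ i, (x : EuclideanSpace ℝ σ) i ≠ (y : EuclideanSpace ℝ σ) i := by
      by_contra! hcon
      exact hxy (Subtype.ext (PiLp.ext hcon))
    exact ⟨coord i, ⟨coord i, ⟨X i, by simp⟩, rfl⟩, hi⟩
  obtain ⟨⟨_, q, rfl⟩, hq⟩ :=
    ContinuousMap.exists_mem_subalgebra_near_continuousMap_of_separatesPoints A hA
      ⟨K.domRestrict h, hh.domRestrict⟩ ε hε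
  refine ⟨q, fun y hy ↦ ?_⟩
  have heval : (aeval coord q) ⟨y, hy⟩ = eval (fun i ↦ y i) q := by
    have : (ContinuousMap.evalAlgHom ℝ ℝ (⟨y, hy⟩ : K)).comp (aeval coord) =
        aeval fun i ↦ y i := by
      ext; simp [coord]
    exact DFunLike.congr_fun this q
  rw [← heval]
  exact (ContinuousMap.norm_coe_le_norm _ (⟨y, hy⟩ : K)).trans_lt hq

/-- A continuous odd function on the unit sphere is a uniform limit of homogeneous polynomials of
odd degree, and the degree may be any sufficiently large odd number. -/
theorem exists_isHomogeneous_near_of_odd {h : EuclideanSpace ℝ σ → ℝ}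
    (hh : ContinuousOn h (Metric.sphere 0 1))
    (hodd : ∀ y ∈ Metric.sphere (0 : EuclideanSpace ℝ σ) 1, h (-y) = -h y) {ε : ℝ} (hε : 0 < ε) :
    ∃ N : ℕ, ∀ n ≥ N, ∃ F : MvPolynomial σ ℝ, F.IsHomogeneous (2 * n + 1) ∧
      ∀ y ∈ Metric.sphere (0 : EuclideanSpace ℝ σ) 1, |eval (fun i ↦ y i) F - h y| < ε := by
  obtain ⟨q, hq⟩ := exists_eval_near_of_continuousOn (isCompact_sphere _ _) hh hε
  refine ⟨q.totalDegree, fun n hn ↦ ⟨∑ k ∈ Finset.range (n + 1),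
    homogeneousComponent (2 * k + 1) q * (∑ j, X j ^ 2) ^ (n - k), ?_, fun y hy ↦ ?_⟩⟩
  · refine IsHomogeneous.sum _ _ _ fun k hk ↦ ?_
    have hk : k ≤ n := Nat.lt_succ_iff.1 (Finset.mem_range.1 hk)
    have h2 : (∑ j : σ, (X j ^ 2 : MvPolynomial σ ℝ)).IsHomogeneous 2 :=
      IsHomogeneous.sum _ _ _ fun j _ ↦ isHomogeneous_X_pow _ _
    convert (homogeneousComponent_isHomogeneous (2 * k + 1) q).mul (h2.pow (n - k)) using 1
    omega
  · have hy1 : ∑ j, y j ^ 2 = 1 := by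
      rw [← EuclideanSpace.real_norm_sq_eq, mem_sphere_zero_iff_norm.1 hy, one_pow]
    have hF := eval_sub_eval_neg q hn fun i ↦ y i
    simp only [map_sum, map_mul, map_pow, eval_X, hy1, one_pow, mul_one]
    have h1 := abs_lt.1 (hq y hy)
    have h2 := abs_lt.1 (hq (-y) (by simpa using hy))
    rw [hodd y hy] at h2
    simp only [PiLp.neg_apply] at h2
    rw [abs_lt]
    constructor <;> linarith

/-- Homogeneous real polynomials of the same odd degree, one fewer than the variables, have common
approximate zeros on the unit sphere. -/
theorem exists_sphere_abs_eval_lt {d D : ℕ} (hD : Odd D) {F : Fin d → MvPolynomial (Fin (d + 1)) ℝ}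
    (hF : ∀ i, (F i).IsHomogeneous D) {ε : ℝ} (hε : 0 < ε) :
    ∃ y ∈ Metric.sphere (0 : EuclideanSpace ℝ (Fin (d + 1))) 1,
      ∀ i, |eval (fun j ↦ y j) (F i)| < ε := by
  let c : Fin (d + 1) → MvPolynomial (Fin d) ℝ := Fin.cons 1 X
  have hc (j) : (c j).totalDegree ≤ 1 := by
    refine Fin.cases ?_ (fun i ↦ ?_) j <;> simp [c]
  have hp (i) : (aeval c (F i)).totalDegree ≤ D :=
    (totalDegree_aeval_le hc _).trans (hF i).totalDegree_le
  obtain ⟨s, hs, hsε⟩ : ∃ s : ℝ, Function.Bijective (Finsupp.linearCombination ℝ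
      (mixedMonomial D fun i ↦ X i ^ D + C s * aeval c (F i))) ∧ ε⁻¹ < s := by
    obtain ⟨s, hs, hsε⟩ := ((countable_not_bijective_mixedMonomial hp).dense_compl ℝ).exists_gt ε⁻¹
    exact ⟨s, not_not.1 hs, hsε⟩
  obtain ⟨x, hx⟩ := exists_eval_eq_zero_of_bijective_mixedMonomial hD hs
  let z : Fin (d + 1) → ℝ := Fin.cons 1 x
  have hzF (i) : x i ^ D + s * eval z (F i) = 0 := by
    have hcomp : eval x (aeval c (F i)) = eval z (F i) := by
      rw [← coe_aeval_eq_eval, ← coe_aeval_eq_eval, RingHom.coe_coe, RingHom.coe_coe,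
        ← AlgHom.comp_apply]
      congr 1
      ext j
      refine Fin.cases ?_ (fun i ↦ ?_) j <;> simp [c, z]
    simpa only [map_add, map_mul, map_pow, eval_X, eval_C, hcomp] using hx i
  let Z : EuclideanSpace ℝ (Fin (d + 1)) := WithLp.toLp 2 z
  have hZ : 0 < ‖Z‖ := by
    rw [norm_pos_iff]
    intro h
    simpa [Z, z] using congrArg (fun w : EuclideanSpace ℝ (Fin (d + 1)) ↦ w 0) h
  have hy : ‖‖Z‖⁻¹ • Z‖ = 1 := by rw [norm_smul, norm_inv, norm_norm, inv_mul_cancel₀ hZ.ne']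
  refine ⟨‖Z‖⁻¹ • Z, mem_sphere_zero_iff_norm.2 hy, fun i ↦ ?_⟩
  have hs0 : 0 < s := (inv_pos.2 hε).trans hsε
  have hcoord : |‖Z‖⁻¹ * x i| ≤ 1 := by
    have := PiLp.norm_apply_le (‖Z‖⁻¹ • Z) i.succ
    rw [hy] at this
    simpa [Z, z] using this
  have hval : s * eval (fun j ↦ (‖Z‖⁻¹ • Z) j) (F i) = -(‖Z‖⁻¹ * x i) ^ D := by
    have := (hF i).eval_mul_left ‖Z‖⁻¹ z
    simp only [PiLp.smul_apply, smul_eq_mul, Z] at this ⊢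
    rw [this, mul_pow]
    linear_combination ‖Z‖⁻¹ ^ D * hzF i
  have habs : s * |eval (fun j ↦ (‖Z‖⁻¹ • Z) j) (F i)| ≤ 1 := by
    nth_rewrite 1 [← abs_of_pos hs0]
    rw [← abs_mul, hval, abs_neg, abs_pow]
    exact pow_le_one₀ (abs_nonneg _) hcoord
  have h1 : 1 < s * ε := by
    rwa [inv_lt_iff_one_lt_mul₀ hε] at hsε
  exact lt_of_mul_lt_mul_left (habs.trans_lt h1) hs0.le

end MvPolynomial

theorem borsuk_ulam_sphere (d : ℕ) (hd : 1 ≤ d)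
    (f : EuclideanSpace ℝ (Fin (d + 1)) → EuclideanSpace ℝ (Fin d))
    (hf : ContinuousOn f (Metric.sphere (0 : EuclideanSpace ℝ (Fin (d + 1))) 1))
    (hodd : ∀ x ∈ Metric.sphere (0 : EuclideanSpace ℝ (Fin (d + 1))) 1,
      f (-x) = -f x) :
    ∃ x ∈ Metric.sphere (0 : EuclideanSpace ℝ (Fin (d + 1))) 1, f x = 0 := by
  by_contra! hne
  have hcont : ContinuousOn (fun x ↦ ‖(f x).ofLp‖) (Metric.sphere 0 1) :=
    ((PiLp.continuous_ofLp 2 _).comp_continuousOn hf).norm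
  obtain ⟨x₀, hx₀, hmin⟩ := (isCompact_sphere (0 : EuclideanSpace ℝ (Fin (d + 1))) 1).exists_isMinOn
    (NormedSpace.sphere_nonempty.2 zero_le_one) hcont
  set δ := ‖(f x₀).ofLp‖
  have hδ : 0 < δ := norm_pos_iff.2 fun h ↦ hne x₀ hx₀ (by ext i; simpa using congrFun h i)
  have happrox (i : Fin d) := MvPolynomial.exists_isHomogeneous_near_of_odd (h := fun x ↦ f x i)
    ((PiLp.continuous_apply 2 _ i).comp_continuousOn hf)
    (fun y hy ↦ by simp [hodd y hy]) (half_pos hδ)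
  choose N hN using happrox
  choose F hF hFf using fun i ↦ hN i (Finset.univ.sup N) (Finset.le_sup (Finset.mem_univ i))
  obtain ⟨y, hy, hyF⟩ := MvPolynomial.exists_sphere_abs_eval_lt ⟨_, rfl⟩ hF (half_pos hδ)
  refine (hmin hy).not_gt ((pi_norm_lt_iff hδ).2 fun i ↦ ?_)
  have h1 := abs_lt.1 (hFf i y hy)
  have h2 := abs_lt.1 (hyF i)
  rw [Real.norm_eq_abs, abs_lt]
  constructor <;> linarith
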